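/- If p > n, then every second-order critical point Y ∈ ℳ of the factorized problem is globally optimal: Tr(C Y Yᵀ) ≤ Tr(C X) for every X ∈ 𝒞, and Tr(C Y Yᵀ) ≤ Tr(C Z Zᵀ) for every Z ∈ ℳ. -/

import Mathlib

/-!
If `Y` does not have full column rank, pick `z ≠ 0` with `Y z = 0`. For every vector `x` the
rank-one direction `x zᵀ` is tangent at `Y`, because `Y (x zᵀ)ᵀ = (Y z) xᵀ = 0`, and with
`S = C - 𝒜*(μ)` the second-order condition along it reads `0 ≤ (xᵀ S x) (zᵀ z)`. Hence `xᵀ S x ≥ 0`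
for all `x`, so that `μ` is a dual certificate, and `S Y = 0` is complementary slackness: weak
duality gives global optimality. When `p > n`, no `Y` has full column rank.
-/

open Matrix MeasureTheory

noncomputable section

/-- Frobenius inner product `⟨A, B⟩ = Tr(Aᵀ B)`. -/
def frobInner {n p : ℕ} (A B : Matrix (Fin n) (Fin p) ℝ) : ℝ := (Aᵀ * B).trace

/-- Frobenius norm. -/
def frobNorm {n p : ℕ} (A : Matrix (Fin n) (Fin p) ℝ) : ℝ := Real.sqrt (frobInner A A)

/-- The constraint map 𝒜, `𝒜(X) i = Tr(A i * X)`. -/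
def Aop {n m : ℕ} (A : Fin m → Matrix (Fin n) (Fin n) ℝ) (X : Matrix (Fin n) (Fin n) ℝ) :
    Fin m → ℝ := fun i => (A i * X).trace

/-- The adjoint 𝒜*, `𝒜*(μ) = ∑ i, μ i • A i`. -/
def Aadj {n m : ℕ} (A : Fin m → Matrix (Fin n) (Fin n) ℝ) (μ : Fin m → ℝ) :
    Matrix (Fin n) (Fin n) ℝ := ∑ i, μ i • A i

/-- The SDP feasible set 𝒞. -/
def sdpFeas {n m : ℕ} (A : Fin m → Matrix (Fin n) (Fin n) ℝ) (b : Fin m → ℝ) :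
    Set (Matrix (Fin n) (Fin n) ℝ) := {X | X.IsSymm ∧ Aop A X = b ∧ X.PosSemidef}

/-- Optimal value `f* = inf {Tr(C X) : X ∈ 𝒞}` of the SDP. -/
def fstar {n m : ℕ} (A : Fin m → Matrix (Fin n) (Fin n) ℝ) (b : Fin m → ℝ)
    (C : Matrix (Fin n) (Fin n) ℝ) : ℝ := sInf ((fun X => (C * X).trace) '' sdpFeas A b)

/-- The factorized feasible set `ℳ_p = {Y : 𝒜(Y Yᵀ) = b}`. -/
def facFeas {n m : ℕ} (A : Fin m → Matrix (Fin n) (Fin n) ℝ) (b : Fin m → ℝ) (p : ℕ) :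
    Set (Matrix (Fin n) (Fin p) ℝ) := {Y | Aop A (Y * Yᵀ) = b}

/-- Tangent space `T_Yℳ = {Ydot : 𝒜(Ydot Yᵀ + Y Ydotᵀ) = 0}`. -/
def tangentSet {n m p : ℕ} (A : Fin m → Matrix (Fin n) (Fin n) ℝ)
    (Y : Matrix (Fin n) (Fin p) ℝ) : Set (Matrix (Fin n) (Fin p) ℝ) :=
  {Ydot | Aop A (Ydot * Yᵀ + Y * Ydotᵀ) = 0}

/-- Second-order critical point of the factorized problem. -/
def IsSOCP {n m p : ℕ} (A : Fin m → Matrix (Fin n) (Fin n) ℝ) (b : Fin m → ℝ)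
    (C : Matrix (Fin n) (Fin n) ℝ) (Y : Matrix (Fin n) (Fin p) ℝ) : Prop :=
  Y ∈ facFeas A b p ∧ ∃ μ : Fin m → ℝ,
    (C - Aadj A μ) * Y = 0 ∧
    ∀ Ydot ∈ tangentSet A Y, 0 ≤ frobInner Ydot ((C - Aadj A μ) * Ydot)

/-- The real vector space of symmetric `n × n` matrices. -/
def symmSpace (n : ℕ) : Submodule ℝ (Matrix (Fin n) (Fin n) ℝ) where
  carrier := {X | X.IsSymm}
  add_mem' := fun ha hb => ha.add hb
  zero_mem' := Matrix.isSymm_zero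
  smul_mem' := fun c X hX => by
    show (c • X)ᵀ = c • X
    rw [Matrix.transpose_smul, hX]

instance (n : ℕ) : MeasurableSpace ↥(symmSpace n) := borel _

/-- A set of symmetric matrices is null if it has measure zero for every additive Haar
measure on the finite-dimensional real vector space of symmetric `n × n` matrices. -/
def IsNullSymmSet (n : ℕ) (S : Set (Matrix (Fin n) (Fin n) ℝ)) : Prop :=
  ∀ μ : Measure ↥(symmSpace n), μ.IsAddHaarMeasure →
    μ {C : ↥(symmSpace n) | (C : Matrix (Fin n) (Fin n) ℝ) ∈ S} = 0

section Matrices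

variable {m n R 𝕜 : Type*} [Fintype n]

theorem exists_mulVec_eq_zero_of_rank_lt_card [CommRing R] [Nontrivial R] {A : Matrix m n R}
    (h : A.rank < Fintype.card n) : ∃ v ≠ 0, A *ᵥ v = 0 := by
  by_contra! hA
  have hinj : Function.Injective A.mulVecLin :=
    (injective_iff_map_eq_zero A.mulVecLin).2 fun v hv ↦ by_contra fun hv₀ ↦ hA v hv₀ hv
  have hrank : A.rank = Fintype.card n :=
    (LinearMap.finrank_range_of_inj hinj).trans (Module.finrank_fintype_fun_eq_card R)
  exact h.ne hrank

open scoped ComplexOrder in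
theorem trace_mul_nonneg_of_posSemidef [RCLike 𝕜] {S X : Matrix n n 𝕜}
    (hS : ∀ x, 0 ≤ star x ⬝ᵥ S *ᵥ x) (hX : X.PosSemidef) : 0 ≤ (S * X).trace := by
  classical
  obtain ⟨B, rfl⟩ : ∃ B : Matrix n n 𝕜, X = B * Bᴴ := by
    open scoped MatrixOrder in
    exact CStarAlgebra.nonneg_iff_eq_mul_star_self.mp hX.nonneg
  calc
    0 ≤ ∑ j, star (B.col j) ⬝ᵥ S *ᵥ B.col j := Finset.sum_nonneg fun j _ ↦ hS (B.col j)
    _ = (Bᴴ * (S * B)).trace := rfl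
    _ = (S * (B * Bᴴ)).trace := by rw [trace_mul_comm, Matrix.mul_assoc]

end Matrices

section Factorized

variable {n m p : ℕ} {A : Fin m → Matrix (Fin n) (Fin n) ℝ} {b : Fin m → ℝ}
  {C : Matrix (Fin n) (Fin n) ℝ} {Y : Matrix (Fin n) (Fin p) ℝ}

theorem frobInner_vecMulVec_mul_vecMulVec (S : Matrix (Fin n) (Fin n) ℝ) (x : Fin n → ℝ)
    (z : Fin p → ℝ) :
    frobInner (vecMulVec x z) (S * vecMulVec x z) = (x ⬝ᵥ S *ᵥ x) * (z ⬝ᵥ z) := by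
  rw [frobInner, mul_vecMulVec, transpose_vecMulVec, vecMulVec_mul_vecMulVec, trace_vecMulVec,
    dotProduct_smul, smul_eq_mul]

theorem mem_tangentSet_of_mul_transpose_eq_zero {V : Matrix (Fin n) (Fin p) ℝ}
    (h : Y * Vᵀ = 0) : V ∈ tangentSet A Y := by
  have h' : V * Yᵀ = 0 := by simpa using congrArg transpose h
  ext i
  simp [Aop, h, h']

theorem vecMulVec_mem_tangentSet {z : Fin p → ℝ} (hz : Y *ᵥ z = 0) (x : Fin n → ℝ) :
    vecMulVec x z ∈ tangentSet A Y :=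
  mem_tangentSet_of_mul_transpose_eq_zero <| by
    rw [transpose_vecMulVec, mul_vecMulVec, hz, zero_vecMulVec]

theorem mul_transpose_mem_sdpFeas (hY : Y ∈ facFeas A b p) : Y * Yᵀ ∈ sdpFeas A b :=
  ⟨by rw [IsSymm, transpose_mul, transpose_transpose], hY, posSemidef_self_mul_conjTranspose Y⟩

theorem trace_Aadj_mul (A : Fin m → Matrix (Fin n) (Fin n) ℝ) (μ : Fin m → ℝ)
    (X : Matrix (Fin n) (Fin n) ℝ) : (Aadj A μ * X).trace = μ ⬝ᵥ Aop A X := by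
  simp [Aadj, Aop, dotProduct, Finset.sum_mul, trace_sum]

theorem trace_mul_le_of_complementary_slackness {μ : Fin m → ℝ}
    {X₀ X : Matrix (Fin n) (Fin n) ℝ} (hS : ∀ x, 0 ≤ x ⬝ᵥ (C - Aadj A μ) *ᵥ x)
    (hSX₀ : ((C - Aadj A μ) * X₀).trace = 0) (hA : Aop A X₀ = Aop A X) (hX : X.PosSemidef) :
    (C * X₀).trace ≤ (C * X).trace := by
  have hSX : 0 ≤ ((C - Aadj A μ) * X).trace := trace_mul_nonneg_of_posSemidef hS hX
  rw [Matrix.sub_mul, trace_sub, trace_Aadj_mul] at hSX hSX₀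
  rw [hA] at hSX₀
  linarith

theorem dotProduct_mulVec_nonneg_of_rank_lt {S : Matrix (Fin n) (Fin n) ℝ} (hY : Y.rank < p)
    (hS : ∀ V ∈ tangentSet A Y, 0 ≤ frobInner V (S * V)) (x : Fin n → ℝ) :
    0 ≤ x ⬝ᵥ S *ᵥ x := by
  obtain ⟨z, hz₀, hz⟩ := exists_mulVec_eq_zero_of_rank_lt_card (A := Y) (by simpa using hY)
  have hcurv : 0 ≤ (x ⬝ᵥ S *ᵥ x) * (z ⬝ᵥ z) := by
    simpa only [frobInner_vecMulVec_mul_vecMulVec] using hS _ (vecMulVec_mem_tangentSet hz x)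
  have hz_pos : 0 < z ⬝ᵥ z := dotProduct_star_self_pos_iff.2 hz₀
  exact nonneg_of_mul_nonneg_left hcurv hz_pos

theorem socp_is_global_optimum_of_p_gt_n_general (hY : Y.rank < p) (hsocp : IsSOCP A b C Y) :
    (∀ X ∈ sdpFeas A b, (C * (Y * Yᵀ)).trace ≤ (C * X).trace) ∧
    (∀ q, ∀ Z ∈ facFeas A b q, (C * (Y * Yᵀ)).trace ≤ (C * (Z * Zᵀ)).trace) := by
  obtain ⟨hYb, μ, hSY, hS⟩ := hsocp
  have hslack : ((C - Aadj A μ) * (Y * Yᵀ)).trace = 0 := by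
    rw [← Matrix.mul_assoc, hSY, Matrix.zero_mul, trace_zero]
  have hsdp : ∀ X ∈ sdpFeas A b, (C * (Y * Yᵀ)).trace ≤ (C * X).trace :=
    fun X ⟨_, hXb, hX⟩ ↦ trace_mul_le_of_complementary_slackness
      (dotProduct_mulVec_nonneg_of_rank_lt hY hS) hslack (hYb.trans hXb.symm) hX
  exact ⟨hsdp, fun q Z hZ ↦ hsdp _ (mul_transpose_mem_sdpFeas hZ)⟩

end Factorized

/-- if `p > n`, every second-order critical point of the factorized problem
is globally optimal, both for the SDP and the factorized problem. -/
theorem socp_is_global_optimum_of_p_gt_n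
    (n m p : ℕ) (hn : 0 < n) (hm : 0 < m) (hp : 0 < p) (hpn : n < p)
    (A : Fin m → Matrix (Fin n) (Fin n) ℝ) (hA : ∀ i, (A i).IsSymm) (b : Fin m → ℝ)
    (C : Matrix (Fin n) (Fin n) ℝ) (hC : C.IsSymm)
    (Y : Matrix (Fin n) (Fin p) ℝ) (hsocp : IsSOCP A b C Y) :
    (∀ X ∈ sdpFeas A b, (C * (Y * Yᵀ)).trace ≤ (C * X).trace) ∧
    (∀ Z ∈ facFeas A b p, (C * (Y * Yᵀ)).trace ≤ (C * (Z * Zᵀ)).trace) := by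
  have h := socp_is_global_optimum_of_p_gt_n_general (Y.rank_le_height.trans_lt hpn) hsocp
  exact ⟨h.1, h.2 p⟩

end
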